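/- Let d ≥ 1, let I be a metric space, let S : I → Matrix d d ℂ be continuous, and let Λ ⊆ Σ_I^+ be a nonempty compact θ_+-invariant subset. Then the following are equivalent: (1) ρ(S|Λ) < 1; (2) S is Λ-absolutely exponentially stable, i.e. limsup_{n→∞} ‖S_{i_n}···S_{i_1}‖^{1/n} < 1 for every i(·) ∈ Λ; (3) S is Λ-pointwise exponentially stable, i.e. limsup_{n→∞} ‖S_{i_n}···S_{i_1} x₀‖^{1/n} < 1 for every nonzero x₀ ∈ ℂ^d and every i(·) ∈ Λ. -/

import Mathlib

open Filter Topology MeasureTheory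

/-- Operator norm on `d × d` complex matrices induced by the Euclidean norm on `ℂ^d`. -/
noncomputable def opNorm {d : ℕ} (A : Matrix (Fin d) (Fin d) ℂ) : ℝ :=
  ‖Matrix.toEuclideanCLM (𝕜 := ℂ) A‖

/-- Spectral radius of a complex matrix, as a real number. -/
noncomputable def specRad {d : ℕ} (A : Matrix (Fin d) (Fin d) ℂ) : ℝ :=
  (spectralRadius ℂ A).toReal

/-- `prodS S x n = S_{i_n} ⋯ S_{i_1}` where `i_k = x (k-1)`. -/
noncomputable def prodS {d : ℕ} {I : Type*} (S : I → Matrix (Fin d) (Fin d) ℂ)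
    (x : ℕ → I) : ℕ → Matrix (Fin d) (Fin d) ℂ
  | 0 => 1
  | n + 1 => S (x n) * prodS S x n

/-- `Λ` is invariant under the one-sided shift `θ₊`. -/
def ShiftInv {I : Type*} (Λ : Set (ℕ → I)) : Prop :=
  ∀ x ∈ Λ, (fun n => x (n + 1)) ∈ Λ

/-- Generalized spectral radius of `S` restricted to `Λ`. -/
noncomputable def gsr {d : ℕ} {I : Type*} (S : I → Matrix (Fin d) (Fin d) ℂ)
    (Λ : Set (ℕ → I)) : ℝ :=
  Filter.limsup (fun n : ℕ => ⨆ x : Λ, specRad (prodS S x.1 n) ^ (1 / (n : ℝ))) Filter.atTop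


section nil
variable {k : Type*} [Field k] {V : Type*} [AddCommGroup V] [Module k V] [FiniteDimensional k V]

/-- consecutive products -/
def cprod {M : Type*} [Monoid M] (A : ℕ → M) (i : ℕ) : ℕ → M
  | 0 => 1
  | l + 1 => A (i + l) * cprod A i l

theorem cprod_add {M : Type*} [Monoid M] (A : ℕ → M) (i l m : ℕ) :
    cprod A i (l + m) = cprod A (i + l) m * cprod A i l := by
  induction m with
  | zero => simp [cprod]
  | succ m ih => rw [← add_assoc, cprod, cprod, ih, mul_assoc, add_assoc]

theorem cprod_block {M : Type*} [Monoid M] (A : ℕ → M) (N i l : ℕ) :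
    cprod (fun j => cprod A (j * N) N) i l = cprod A (i * N) (l * N) := by
  induction l with
  | zero => simp [cprod]
  | succ l ih => rw [cprod, ih, add_mul, Nat.succ_mul, cprod_add]

theorem cprod_shift {M : Type*} [Monoid M] (A : ℕ → M) (s i l : ℕ) :
    cprod (fun j => A (s + j)) i l = cprod A (s + i) l := by
  induction l with
  | zero => simp [cprod]
  | succ l ih => rw [cprod, ih, cprod, add_assoc]

/-- If `Q` is nilpotent and injective on its range then it is zero. -/
theorem nil_disj {k : Type*} [Field k] {V : Type*} [AddCommGroup V] [Module k V] (Q : Module.End k V) (h : IsNilpotent Q)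
    (hd : ∀ v, Q (Q v) = 0 → Q v = 0) : Q = 0 := by
  obtain ⟨n, hn⟩ := h
  have key : ∀ n : ℕ, ∀ v, (Q ^ (n+1)) v = 0 → Q v = 0 := by
    intro n
    induction n with
    | zero => intro v hv; simpa using hv
    | succ n ih =>
      intro v hv
      have : (Q ^ (n+1)) (Q v) = 0 := by
        rw [pow_succ] at hv; exact hv
      exact hd v (ih _ this)
  ext v
  apply key n v
  rw [pow_succ', hn]; simp

theorem tri_bound {W X : Type*} [AddCommGroup W] [Module k W] [FiniteDimensional k W]
    (n : ℕ) (g : Fin n → W) (ev : X → W →ₗ[k] k) (u : Fin n → X)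
    (h1 : ∀ i, ev (u i) (g i) ≠ 0) (h2 : ∀ i j, i < j → ev (u j) (g i) = 0) :
    n ≤ Module.finrank k W := by
  let M : Matrix (Fin n) (Fin n) k := fun i j => ev (u j) (g i)
  have hdet : M.det ≠ 0 := by
    rw [Matrix.det_of_isLowerTriangular M (by intro i j hij; exact h2 i j hij)]
    exact Finset.prod_ne_zero_iff.2 fun i _ => h1 i
  have hli : LinearIndependent k M.row := by
    rw [Matrix.linearIndependent_rows_iff_isUnit, Matrix.isUnit_iff_isUnit_det]
    exact hdet.isUnit
  let φ : W →ₗ[k] (Fin n → k) := LinearMap.pi fun j => ev (u j)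
  have : LinearIndependent k g := by
    apply LinearIndependent.of_comp φ
    exact hli
  simpa using this.fintype_card_le_finrank

theorem nil_step (r : ℕ) (hr : 1 ≤ r) : ∃ D : ℕ, ∀ B : ℕ → Module.End k V,
    (∀ i l, 1 ≤ l → IsNilpotent (cprod B i l)) →
    (∀ i, Module.finrank k (LinearMap.range (B i)) ≤ r) →
    Module.finrank k (LinearMap.range (cprod B 0 (D + 2))) < r := by
  let W := MultilinearMap k (fun _ : Fin r => V) k
  refine ⟨Module.finrank k W, ?_⟩
  intro B hnil hrk
  by_contra hcon
  push Not at hcon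
  set D := Module.finrank k W
  -- rank of factors
  have hge : ∀ i l, i + l ≤ D + 2 → r ≤ Module.finrank k (LinearMap.range (cprod B i l)) := by
    intro i l hil
    obtain ⟨t, ht⟩ := Nat.exists_eq_add_of_le hil
    refine hcon.trans ?_
    rw [ht, cprod_add, cprod_add, zero_add, zero_add]
    rw [Module.End.mul_eq_comp, Module.End.mul_eq_comp]
    calc _ ≤ Module.finrank k (LinearMap.range ((cprod B i l) ∘ₗ (cprod B 0 i))) := by
          rw [LinearMap.range_comp (cprod B i l ∘ₗ cprod B 0 i)]
          exact Submodule.finrank_map_le _ _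
      _ ≤ _ := Submodule.finrank_mono (LinearMap.range_comp_le_range _ _)
  have hr1 : ∀ i, i < D + 2 → Module.finrank k (LinearMap.range (B i)) = r := by
    intro i hi
    refine le_antisymm (hrk i) ?_
    have := hge i 1 (by omega)
    rwa [show cprod B i 1 = B i by simp [cprod]] at this
  -- kernel and range
  have hrange : ∀ i l, i + (l + 1) ≤ D + 2 →
      LinearMap.range (cprod B i (l+1)) = LinearMap.range (B (i + l)) := by
    intro i l hil
    refine Submodule.eq_of_le_of_finrank_le (LinearMap.range_comp_le_range _ _) ?_
    exact (hrk _).trans (hge _ _ hil)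
  have hker : ∀ i l, i + (l + 1) ≤ D + 2 →
      LinearMap.ker (B i) = LinearMap.ker (cprod B i (l+1)) := by
    intro i l hil
    refine Submodule.eq_of_le_of_finrank_le ?_ ?_
    · rw [add_comm l 1, cprod_add]
      intro v hv
      simp only [cprod, LinearMap.mem_ker] at hv ⊢
      simp [hv]
    · have h1 := LinearMap.finrank_range_add_finrank_ker (B i)
      have h2 := LinearMap.finrank_range_add_finrank_ker (cprod B i (l+1))
      have h3 := hge _ _ hil
      have h4 := hrk i
      omega
  have hrange' : ∀ i : Fin (D+2), Nonempty (LinearMap.range (B i) ≃ₗ[k] (Fin r → k)) := by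
    intro i
    refine FiniteDimensional.nonempty_linearEquiv_of_finrank_eq ?_
    rw [hr1 i i.2]; simp
  have e := fun i => (hrange' i).some
  clear hrange'
  let p : (i : Fin (D+2)) → V →ₗ[k] (Fin r → k) := fun i => (e i).toLinearMap ∘ₗ (B i).rangeRestrict
  let f : Fin (D+2) → W := fun i =>
    (Matrix.detRowAlternating (R := k) (n := Fin r)).toMultilinearMap.compLinearMap (fun _ => p i)
  let T : Fin (D+2) → Fin (D+2) → ((Fin r → k) →ₗ[k] (Fin r → k)) := fun i j =>
    p i ∘ₗ (LinearMap.range (B j)).subtype ∘ₗ (e j).symm.toLinearMap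
  let u : Fin (D+2) → (Fin r → V) := fun j t => ((e j).symm (Pi.single t 1) : V)
  have hf : ∀ i j, f i (u j) = LinearMap.det (T i j) := by
    intro i j
    rw [← LinearMap.det_toMatrix', ← Matrix.det_transpose]
    change Matrix.det _ = Matrix.det _
    congr 1
  have hp : ∀ i v, p i v = 0 ↔ B i v = 0 := by
    intro i v
    simp only [p, LinearMap.comp_apply, LinearEquiv.coe_coe, LinearEquiv.map_eq_zero_iff]
    rw [← Subtype.coe_inj]; simp
  have hTinj : ∀ i j, (f i (u j) ≠ 0) ↔ ∀ v, B i (B j v) = 0 → B j v = 0 := by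
    intro i j
    rw [hf]
    constructor
    · intro h v hv
      have hk : LinearMap.ker (T i j) = ⊥ := by
        by_contra hk
        exact h (LinearMap.det_eq_zero_iff_ker_ne_bot.2 hk)
      have h1 : T i j (e j ⟨B j v, LinearMap.mem_range_self _ v⟩) = 0 := by
        simp only [T, LinearMap.comp_apply, LinearEquiv.coe_coe, LinearEquiv.symm_apply_apply,
          Submodule.subtype_apply]
        exact (hp _ _).2 hv
      have h2 := (LinearMap.ker_eq_bot'.1 hk) _ h1
      rw [LinearEquiv.map_eq_zero_iff] at h2
      exact congrArg Subtype.val h2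
    · intro h h0
      refine LinearMap.det_eq_zero_iff_ker_ne_bot.1 h0 ?_
      rw [LinearMap.ker_eq_bot']
      intro w hw
      simp only [T, LinearMap.comp_apply, LinearEquiv.coe_coe, Submodule.subtype_apply] at hw
      rw [hp] at hw
      obtain ⟨v, hv⟩ := ((e j).symm w).2
      rw [← hv] at hw
      have := h v hw
      rw [hv] at this
      have h3 : (e j).symm w = 0 := Subtype.ext this
      simpa using h3
  have hle := tri_bound (k := k) (W := W) (X := Fin r → V) (D + 1) (fun i => f i.succ)
    (fun x => { toFun := fun g => g x, map_add' := fun _ _ => rfl, map_smul' := fun _ _ => rfl })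
    (fun j => u j.castSucc) ?_ ?_
  · change D + 1 ≤ D at hle
    omega
  · intro i
    change f i.succ (u i.castSucc) ≠ 0
    rw [hTinj]
    intro v hv
    have hk := hker i 1 (by omega)
    have : v ∈ LinearMap.ker (cprod B i (1+1)) := by
      simpa [cprod] using hv
    rw [← hk] at this
    simpa using this
  · intro i j hij
    change f i.succ (u j.castSucc) = 0
    by_contra hne
    have hne := (hTinj _ _).1 hne
    obtain ⟨l, hl⟩ := Nat.exists_eq_add_of_le (show (i:ℕ) + 1 ≤ j from hij)
    have hb : (i:ℕ) + 1 + (l + 1) ≤ D + 2 := by have := j.2; omega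
    have hQ := nil_disj (cprod B (i+1) (l+1)) (hnil _ _ (by omega)) ?_
    · have := hge _ _ hb
      rw [hQ] at this
      have h00 : Module.finrank k (LinearMap.range (0 : V →ₗ[k] V)) = 0 := by
        rw [LinearMap.range_zero, finrank_bot]
      exact absurd (this.trans h00.le) (by omega)
    · intro v hv
      have hm : cprod B (i+1) (l+1) v ∈ LinearMap.range (B (i + 1 + l)) := by
        rw [← hrange _ _ hb]; exact LinearMap.mem_range_self _ v
      rw [← hl] at hm
      obtain ⟨w, hw⟩ := hm
      rw [← hw]
      apply hne
      have : cprod B (i+1) (l+1) v ∈ LinearMap.ker (B (i+1)) := by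
        rw [hker _ _ hb]; exact hv
      simp only [Fin.val_castSucc, Fin.val_succ]
      rw [hw]; exact this

theorem nil_main : ∃ N : ℕ, 1 ≤ N ∧ ∀ A : ℕ → Module.End k V,
    (∀ i l, 1 ≤ l → IsNilpotent (cprod A i l)) → cprod A 0 N = 0 := by
  have key : ∀ s : ℕ, ∃ N : ℕ, 1 ≤ N ∧ ∀ A : ℕ → Module.End k V,
      (∀ i l, 1 ≤ l → IsNilpotent (cprod A i l)) →
      Module.finrank k (LinearMap.range (cprod A 0 N)) ≤ Module.finrank k V - s := by
    intro s
    induction s with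
    | zero => exact ⟨1, le_rfl, fun A _ => by simpa using Submodule.finrank_le _⟩
    | succ s ih =>
      obtain ⟨N, hN, h⟩ := ih
      rcases Nat.eq_zero_or_pos (Module.finrank k V - s) with h0 | h0
      · exact ⟨N, hN, fun A hA => (h A hA).trans (by omega)⟩
      obtain ⟨D, hD⟩ := nil_step (k := k) (V := V) (Module.finrank k V - s) h0
      refine ⟨(D+2) * N, Nat.mul_pos (by omega) hN, fun A hA => ?_⟩
      have := hD (fun j => cprod A (j * N) N) ?_ ?_
      · rw [cprod_block, zero_mul] at this
        omega
      · intro i l hl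
        rw [cprod_block]
        exact hA _ _ (Nat.mul_pos hl hN)
      · intro i
        have := h (fun j => A (i * N + j)) (fun a l hl => by rw [cprod_shift]; exact hA _ _ hl)
        rwa [cprod_shift] at this
  obtain ⟨N, hN, h⟩ := key (Module.finrank k V)
  refine ⟨N, hN, fun A hA => ?_⟩
  have := h A hA
  rw [Nat.sub_self, Nat.le_zero, Submodule.finrank_eq_zero, LinearMap.range_eq_bot] at this
  exact this

theorem nil_matrix (k : Type*) [Field k] (d : ℕ) : ∃ N : ℕ, 1 ≤ N ∧
    ∀ A : ℕ → Matrix (Fin d) (Fin d) k,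
    (∀ i l, 1 ≤ l → IsNilpotent (cprod A i l)) → cprod A 0 N = 0 := by
  obtain ⟨N, hN, h⟩ := nil_main (k := k) (V := Fin d → k)
  have hc : ∀ (A : ℕ → Matrix (Fin d) (Fin d) k) i l,
      cprod (fun j => Matrix.toLinAlgEquiv' (A j)) i l = Matrix.toLinAlgEquiv' (cprod A i l) := by
    intro A i l
    induction l with
    | zero => simp [cprod]
    | succ l ih => rw [cprod, ih, cprod, map_mul]
  refine ⟨N, hN, fun A hA => ?_⟩
  have := h (fun j => Matrix.toLinAlgEquiv' (A j)) (fun i l hl => by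
    rw [hc]; exact (hA i l hl).map _)
  rw [hc] at this
  simpa using this
end nil

section resid

theorem ev_exp (C ε : ℝ) (hε : 0 < ε) :
    ∀ᶠ n : ℕ in (hyperfilter ℕ : Filter ℕ), C ≤ Real.exp (ε * (n:ℝ)) := by
  refine Nat.hyperfilter_le_atTop ?_
  have : Tendsto (fun n : ℕ => Real.exp (ε * (n:ℝ))) atTop atTop :=
    Real.tendsto_exp_atTop.comp (tendsto_natCast_atTop_atTop.const_mul_atTop (by positivity))
  exact this.eventually_ge_atTop C

/-- sequences of subexponential growth -/
def subexpRing : Subring (ℕ → ℂ) where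
  carrier := {z | ∀ ε > 0, ∀ᶠ n : ℕ in (hyperfilter ℕ : Filter ℕ),
    ‖z n‖ ≤ Real.exp (ε * (n : ℝ))}
  mul_mem' := by
    intro a b ha hb ε hε
    filter_upwards [ha (ε/2) (by positivity), hb (ε/2) (by positivity)] with n h1 h2
    rw [Pi.mul_apply, norm_mul, show ε * (n:ℝ) = ε/2 * n + ε/2*n by ring, Real.exp_add]
    gcongr
  one_mem' := by
    intro ε hε
    refine Eventually.of_forall fun n => ?_
    rw [Pi.one_apply, norm_one]
    exact Real.one_le_exp (by positivity)
  add_mem' := by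
    intro a b ha hb ε hε
    filter_upwards [ha (ε/2) (by positivity), hb (ε/2) (by positivity),
      ev_exp 2 (ε/2) (by positivity)] with n h1 h2 h3
    rw [Pi.add_apply, show ε * (n:ℝ) = ε/2 * n + ε/2*n by ring, Real.exp_add]
    refine (norm_add_le _ _).trans ?_
    nlinarith [Real.exp_pos (ε/2 * (n:ℝ))]
  zero_mem' := by
    intro ε hε
    refine Eventually.of_forall fun n => ?_
    simp [Real.exp_nonneg]
  neg_mem' := by
    intro a ha ε hε
    filter_upwards [ha ε hε] with n h
    simpa using h

/-- exponentially small sequences -/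
def expSmall : Ideal subexpRing where
  carrier := {z | ∃ δ > 0, ∀ᶠ n : ℕ in (hyperfilter ℕ : Filter ℕ),
    ‖z.1 n‖ ≤ Real.exp (-(δ * (n : ℝ)))}
  add_mem' := by
    rintro a b ⟨δ, hδ, ha⟩ ⟨δ', hδ', hb⟩
    refine ⟨min δ δ' / 2, by positivity, ?_⟩
    filter_upwards [ha, hb, ev_exp 2 (min δ δ' / 2) (by positivity)] with n h1 h2 h3
    have e1 : ‖a.1 n‖ ≤ Real.exp (-(min δ δ' * n)) :=
      h1.trans (Real.exp_le_exp.2 (by gcongr; exact min_le_left _ _))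
    have e2 : ‖b.1 n‖ ≤ Real.exp (-(min δ δ' * n)) :=
      h2.trans (Real.exp_le_exp.2 (by gcongr; exact min_le_right _ _))
    refine (norm_add_le (a.1 n) (b.1 n)).trans ?_
    rw [show -(min δ δ' / 2 * (n:ℝ)) = -(min δ δ' * n) + min δ δ' / 2 * n by ring, Real.exp_add]
    nlinarith [Real.exp_pos (-(min δ δ' * (n:ℝ)))]
  zero_mem' := ⟨1, one_pos, Eventually.of_forall fun n => by simp [Real.exp_nonneg]⟩
  smul_mem' := by
    rintro c a ⟨δ, hδ, ha⟩
    refine ⟨δ / 2, by positivity, ?_⟩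
    filter_upwards [ha, c.2 (δ/2) (by positivity)] with n h1 h2
    change ‖c.1 n * a.1 n‖ ≤ _
    rw [norm_mul, show -(δ / 2 * (n:ℝ)) = δ / 2 * n + -(δ * n) by ring, Real.exp_add]
    gcongr

theorem mem_expSmall (z : subexpRing) : z ∈ expSmall ↔
    ∃ δ > 0, ∀ᶠ n : ℕ in (hyperfilter ℕ : Filter ℕ), ‖z.1 n‖ ≤ Real.exp (-(δ * (n : ℝ))) :=
  Iff.rfl

instance expSmall_max : expSmall.IsMaximal := by
  rw [Ideal.isMaximal_iff]
  constructor
  · rw [mem_expSmall]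
    rintro ⟨δ, hδ, h⟩
    have := (h.and (ev_exp 2 δ hδ)).exists
    obtain ⟨n, h1, h2⟩ := this
    change ‖(1:ℂ)‖ ≤ _ at h1
    rw [norm_one, Real.exp_neg] at h1
    have := inv_le_one_of_one_le₀ (by linarith : 1 ≤ Real.exp (δ * n))
    have h3 : (Real.exp (δ * n))⁻¹ ≤ 2⁻¹ := by gcongr
    norm_num at h3
    linarith
  · intro J x hJ hx hxJ
    rw [mem_expSmall] at hx
    push Not at hx
    have hinv : (fun n => (x.1 n)⁻¹) ∈ subexpRing := by
      intro ε hε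
      have := hx ε hε
      filter_upwards [this] with n hn
      rw [norm_inv, ← inv_inv (Real.exp _), ← Real.exp_neg]
      gcongr
    have h1 : (1 - ⟨_, hinv⟩ * x : subexpRing) ∈ expSmall := by
      refine ⟨1, one_pos, ?_⟩
      have := hx 1 one_pos
      filter_upwards [this] with n hn
      have hne : x.1 n ≠ 0 := by
        intro h0; rw [h0, norm_zero] at hn; exact absurd hn (not_lt.2 (Real.exp_nonneg _))
      change ‖1 - (x.1 n)⁻¹ * x.1 n‖ ≤ _
      rw [inv_mul_cancel₀ hne]; simp [Real.exp_nonneg]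
    have := J.add_mem (hJ h1) (J.mul_mem_left ⟨_, hinv⟩ hxJ)
    simpa using this

theorem cprod_map {M M' : Type*} [Monoid M] [Monoid M'] (φ : M →* M') (A : ℕ → M) (i l : ℕ) :
    cprod (fun j => φ (A j)) i l = φ (cprod A i l) := by
  induction l with
  | zero => simp [cprod]
  | succ l ih => rw [cprod, ih, cprod, map_mul]

theorem coeff_small (d : ℕ) (B : Matrix (Fin d) (Fin d) ℂ) (b : ℝ) (hb : 0 ≤ b) (hb1 : b ≤ 1)
    (h : ∀ z ∈ B.charpoly.roots, ‖z‖ ≤ b) (i : ℕ) (hi : i < d) :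
    ‖B.charpoly.coeff i‖ ≤ 2 ^ d * b := by
  have := Polynomial.coeff_le_of_roots_le (p := B.charpoly) (f := RingHom.id ℂ) (B := b) i
    (Matrix.charpoly_monic B) (IsAlgClosed.splits _) (by simpa using h)
  rw [Polynomial.map_id, Matrix.charpoly_natDegree_eq_dim, Fintype.card_fin] at this
  refine this.trans ?_
  rw [mul_comm]
  have h2 : (d.choose i : ℝ) ≤ 2 ^ d := by exact_mod_cast Nat.choose_le_two_pow d i
  have h3 : b ^ (d - i) ≤ b := pow_le_of_le_one hb hb1 (by omega)
  gcongr

theorem asym (d : ℕ) : ∃ N : ℕ, 1 ≤ N ∧ ∀ A : ℕ → ℕ → Matrix (Fin d) (Fin d) ℂ,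
    (∀ i a b, ∀ ε > 0, ∀ᶠ n : ℕ in (hyperfilter ℕ : Filter ℕ),
      ‖A i n a b‖ ≤ Real.exp (ε * (n : ℝ))) →
    (∀ i l, 1 ≤ l → ∃ δ > 0, ∀ᶠ n : ℕ in (hyperfilter ℕ : Filter ℕ),
      ∀ z ∈ (cprod (fun j => A j n) i l).charpoly.roots, ‖z‖ ≤ Real.exp (-(δ * (n : ℝ)))) →
    ∀ a b, ∃ δ > 0, ∀ᶠ n : ℕ in (hyperfilter ℕ : Filter ℕ),
      ‖cprod (fun j => A j n) 0 N a b‖ ≤ Real.exp (-(δ * (n : ℝ))) := by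
  let _ : Field (subexpRing ⧸ expSmall) := Ideal.Quotient.field expSmall
  obtain ⟨N, hN, h⟩ := nil_matrix (subexpRing ⧸ expSmall) d
  refine ⟨N, hN, fun A h1 h2 => ?_⟩
  let A' : ℕ → Matrix (Fin d) (Fin d) subexpRing := fun i a b => ⟨fun n => A i n a b, h1 i a b⟩
  let q : subexpRing →+* subexpRing ⧸ expSmall := Ideal.Quotient.mk expSmall
  let ev : ℕ → subexpRing →+* ℂ := fun n => (Pi.evalRingHom (fun _ => ℂ) n).comp subexpRing.subtype
  have hev : ∀ n i l, (ev n).mapMatrix (cprod A' i l) = cprod (fun j => A j n) i l := by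
    intro n i l
    exact (cprod_map ((ev n).mapMatrix (m := Fin d)).toMonoidHom A' i l).symm
  have hq : ∀ i l, cprod (fun j => q.mapMatrix (A' j)) i l = q.mapMatrix (cprod A' i l) := by
    intro i l
    exact cprod_map (q.mapMatrix (m := Fin d)).toMonoidHom A' i l
  have hz := h (fun j => q.mapMatrix (A' j)) ?_
  · intro a b
    rw [hq] at hz
    have h3 : q (cprod A' 0 N a b) = 0 := congrFun (congrFun hz a) b
    rw [Ideal.Quotient.eq_zero_iff_mem, mem_expSmall] at h3
    obtain ⟨δ, hδ, h4⟩ := h3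
    refine ⟨δ, hδ, ?_⟩
    filter_upwards [h4] with n hn
    rw [← hev]
    exact hn
  · intro i l hl
    rw [hq]
    have hchar : (q.mapMatrix (cprod A' i l)).charpoly = Polynomial.X ^ d := by
      ext j
      rw [RingHom.mapMatrix_apply, Matrix.charpoly_map, Polynomial.coeff_map,
        Polynomial.coeff_X_pow]
      rcases lt_trichotomy j d with hj | hj | hj
      · rw [if_neg hj.ne, Ideal.Quotient.eq_zero_iff_mem, mem_expSmall]
        obtain ⟨δ, hδ, h4⟩ := h2 i l hl
        refine ⟨δ/2, by positivity, ?_⟩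
        filter_upwards [h4, ev_exp (2^d) (δ/2) (by positivity)] with n hn hn2
        have h5 : ((cprod A' i l).charpoly.coeff j).1 n =
            (cprod (fun j => A j n) i l).charpoly.coeff j := by
          rw [← hev, RingHom.mapMatrix_apply, Matrix.charpoly_map, Polynomial.coeff_map]
          rfl
        rw [h5]
        refine (coeff_small d _ _ (Real.exp_nonneg _) ?_ hn j hj).trans ?_
        · rw [Real.exp_le_one_iff]
          have : 0 ≤ δ * (n:ℝ) := by positivity
          linarith
        · rw [show -(δ / 2 * (n:ℝ)) = δ / 2 * n + -(δ * n) by ring, Real.exp_add]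
          gcongr
      · subst hj
        rw [if_pos rfl]
        have := (Matrix.charpoly_monic (cprod A' i l)).coeff_natDegree
        rw [Matrix.charpoly_natDegree_eq_dim, Fintype.card_fin] at this
        rw [this, map_one]
      · rw [if_neg hj.ne', Polynomial.coeff_eq_zero_of_natDegree_lt, map_zero]
        rw [Matrix.charpoly_natDegree_eq_dim, Fintype.card_fin]; exact hj
    refine ⟨d, ?_⟩
    have := Matrix.aeval_self_charpoly (q.mapMatrix (cprod A' i l))
    rw [hchar] at this
    simpa using this
end resid

section dyn
variable {d : ℕ} {I : Type*}

theorem opNorm_nonneg (A : Matrix (Fin d) (Fin d) ℂ) : 0 ≤ opNorm A := norm_nonneg _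

theorem opNorm_mul (A B : Matrix (Fin d) (Fin d) ℂ) : opNorm (A * B) ≤ opNorm A * opNorm B := by
  unfold opNorm; rw [map_mul]; exact norm_mul_le _ _

theorem opNorm_one_le : opNorm (1 : Matrix (Fin d) (Fin d) ℂ) ≤ 1 := by
  unfold opNorm; rw [map_one]; exact ContinuousLinearMap.norm_id_le

theorem opNorm_one (hd : 1 ≤ d) : opNorm (1 : Matrix (Fin d) (Fin d) ℂ) = 1 := by
  have : Nonempty (Fin d) := ⟨⟨0, hd⟩⟩
  unfold opNorm; rw [map_one]; exact norm_one

theorem opNorm_smul (c : ℂ) (A : Matrix (Fin d) (Fin d) ℂ) : opNorm (c • A) = ‖c‖ * opNorm A := by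
  unfold opNorm; rw [map_smul, norm_smul]

theorem continuous_opNorm : Continuous (opNorm (d := d)) := by
  let φ : Matrix (Fin d) (Fin d) ℂ →ₗ[ℂ]
      (EuclideanSpace ℂ (Fin d) →L[ℂ] EuclideanSpace ℂ (Fin d)) :=
    { toFun := fun A => Matrix.toEuclideanCLM (𝕜 := ℂ) A
      map_add' := fun A B => map_add _ A B
      map_smul' := fun c A => map_smul _ c A }
  have : Continuous φ := LinearMap.continuous_of_finiteDimensional _
  exact this.norm

theorem col_apply (A : Matrix (Fin d) (Fin d) ℂ) (a b : Fin d) :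
    (Matrix.toEuclideanCLM (𝕜 := ℂ) A (EuclideanSpace.single b 1)) a = A a b := by
  simp

theorem entry_le (A : Matrix (Fin d) (Fin d) ℂ) (a b : Fin d) : ‖A a b‖ ≤ opNorm A := by
  rw [← col_apply A a b]
  refine (PiLp.norm_apply_le _ a).trans ?_
  refine (ContinuousLinearMap.le_opNorm _ _).trans ?_
  simp [opNorm]

theorem opNorm_le_cols (A : Matrix (Fin d) (Fin d) ℂ) :
    opNorm A ≤ ∑ b, ‖Matrix.toEuclideanCLM (𝕜 := ℂ) A (EuclideanSpace.single b 1)‖ := by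
  refine ContinuousLinearMap.opNorm_le_bound _ (by positivity) fun v => ?_
  have hv : v = ∑ b, v b • EuclideanSpace.single b (1:ℂ) := by
    ext a
    simp [Finset.sum_apply, Pi.single_apply]
  conv_lhs => rw [hv]
  rw [map_sum, Finset.sum_mul]
  refine (norm_sum_le _ _).trans (Finset.sum_le_sum fun b _ => ?_)
  rw [map_smul, norm_smul, mul_comm]
  gcongr
  exact PiLp.norm_apply_le _ b

theorem opNorm_le_entries (A : Matrix (Fin d) (Fin d) ℂ) :
    opNorm A ≤ ∑ b, ∑ a, ‖A a b‖ := by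
  refine (opNorm_le_cols A).trans (Finset.sum_le_sum fun b _ => ?_)
  set w := Matrix.toEuclideanCLM (𝕜 := ℂ) A (EuclideanSpace.single b 1) with hw
  have hv : w = ∑ a, w a • EuclideanSpace.single a (1:ℂ) := by
    ext a
    simp [Finset.sum_apply, Pi.single_apply]
  rw [hv]
  refine (norm_sum_le _ _).trans (Finset.sum_le_sum fun a _ => ?_)
  rw [norm_smul, hw, col_apply]; simp

theorem specRad_eq (A : Matrix (Fin d) (Fin d) ℂ) :
    spectralRadius ℂ A = spectralRadius ℂ (Matrix.toEuclideanCLM (𝕜 := ℂ) A) := by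
  unfold spectralRadius
  rw [AlgEquiv.spectrum_eq (Matrix.toEuclideanCLM (𝕜 := ℂ) (n := Fin d)) A]

theorem specRad_le_e (hd : 1 ≤ d) (A : Matrix (Fin d) (Fin d) ℂ) :
    spectralRadius ℂ A ≤ ‖Matrix.toEuclideanCLM (𝕜 := ℂ) A‖₊ := by
  have : Nonempty (Fin d) := ⟨⟨0, hd⟩⟩
  rw [specRad_eq]
  exact spectrum.spectralRadius_le_nnnorm _

theorem specRad_le (hd : 1 ≤ d) (A : Matrix (Fin d) (Fin d) ℂ) : specRad A ≤ opNorm A := by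
  have := ENNReal.toReal_mono ENNReal.coe_ne_top (specRad_le_e hd A)
  simpa [specRad, opNorm] using this

theorem specRad_nonneg (A : Matrix (Fin d) (Fin d) ℂ) : 0 ≤ specRad A := ENNReal.toReal_nonneg

theorem root_le (hd : 1 ≤ d) (A : Matrix (Fin d) (Fin d) ℂ) (c : ℝ) (hc : 0 < c) (z : ℂ)
    (hz : z ∈ ((c : ℂ) • A).charpoly.roots) : ‖z‖ ≤ c * specRad A := by
  have hc' : (c : ℂ) ≠ 0 := by exact_mod_cast hc.ne'
  have h1 : z ∈ spectrum ℂ ((c : ℂ) • A) := by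
    rw [Matrix.mem_spectrum_iff_isRoot_charpoly]
    exact Polynomial.isRoot_of_mem_roots hz
  have h2 : (c : ℂ)⁻¹ * z ∈ spectrum ℂ A := by
    have := (spectrum.smul_mem_smul_iff (R := ℂ) (a := A) (s := (c:ℂ)⁻¹ * z)
      (r := Units.mk0 (c:ℂ) hc')).1
    apply this
    change (c:ℂ) * ((c:ℂ)⁻¹ * z) ∈ spectrum ℂ ((c:ℂ) • A)
    rwa [mul_inv_cancel_left₀ hc']
  have h3 : (‖(c : ℂ)⁻¹ * z‖₊ : ENNReal) ≤ spectralRadius ℂ A :=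
    le_iSup₂ (f := fun k (_ : k ∈ spectrum ℂ A) => (‖k‖₊ : ENNReal)) _ h2
  have h4 := ENNReal.toReal_mono (ne_top_of_le_ne_top ENNReal.coe_ne_top (specRad_le_e hd A)) h3
  change ‖(c : ℂ)⁻¹ * z‖ ≤ specRad A at h4
  rw [norm_mul, norm_inv, Complex.norm_real, Real.norm_of_nonneg hc.le] at h4
  rwa [inv_mul_le_iff₀ hc] at h4

theorem prodS_shift (S : I → Matrix (Fin d) (Fin d) ℂ) (x : ℕ → I) (i l : ℕ) :
    prodS S (fun j => x (j + i)) l = cprod (fun j => S (x j)) i l := by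
  induction l with
  | zero => rfl
  | succ l ih => rw [prodS, ih, cprod, add_comm]

theorem prodS_eq (S : I → Matrix (Fin d) (Fin d) ℂ) (x : ℕ → I) (l : ℕ) :
    prodS S x l = cprod (fun j => S (x j)) 0 l := prodS_shift S x 0 l

theorem prodS_add (S : I → Matrix (Fin d) (Fin d) ℂ) (x : ℕ → I) (i l : ℕ) :
    prodS S x (i + l) = prodS S (fun j => x (j + i)) l * prodS S x i := by
  rw [prodS_shift, prodS_eq, prodS_eq, cprod_add, zero_add]

theorem shift_mem {Λ : Set (ℕ → I)} (hinv : ShiftInv Λ) (i : ℕ) :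
    ∀ x ∈ Λ, (fun j => x (j + i)) ∈ Λ := by
  induction i with
  | zero => intro x hx; exact hx
  | succ i ih =>
    intro x hx
    have := hinv _ (ih x hx)
    simpa [add_assoc, add_comm, add_left_comm] using this

theorem exists_M [TopologicalSpace I] (S : I → Matrix (Fin d) (Fin d) ℂ) (hS : Continuous S)
    (Λ : Set (ℕ → I)) (hcomp : IsCompact Λ) (hinv : ShiftInv Λ) :
    ∃ M : ℝ, 1 ≤ M ∧ ∀ x ∈ Λ, ∀ n, opNorm (prodS S x n) ≤ M ^ n := by
  obtain ⟨M, hM⟩ := (hcomp.image (f := fun x : ℕ → I => opNorm (S (x 0)))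
    (continuous_opNorm.comp (hS.comp (continuous_apply 0)))).bddAbove
  refine ⟨max M 1, le_max_right _ _, fun x hx n => ?_⟩
  induction n with
  | zero => simpa [prodS] using opNorm_one_le
  | succ n ih =>
    rw [prodS, pow_succ']
    refine (opNorm_mul _ _).trans ?_
    have h1 : opNorm (S (x n)) ≤ max M 1 := by
      refine le_trans ?_ (le_max_left _ _)
      have := hM ⟨_, shift_mem hinv n x hx, rfl⟩
      simpa using this
    exact mul_le_mul h1 ih (opNorm_nonneg _) (by positivity)

theorem continuous_prodS [TopologicalSpace I] (S : I → Matrix (Fin d) (Fin d) ℂ)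
    (hS : Continuous S) (n : ℕ) : Continuous fun x : ℕ → I => prodS S x n := by
  induction n with
  | zero => exact continuous_const
  | succ n ih => exact (hS.comp (continuous_apply n)).matrix_mul ih

theorem limsup_lt_of_le (f : ℕ → ℝ) (h0 : ∀ n, 0 ≤ f n) (C r : ℝ) (hr : 0 < r) (hr1 : r < 1)
    (h : ∀ᶠ n : ℕ in atTop, f n ≤ C * r ^ n) :
    limsup (fun n : ℕ => f n ^ (1 / (n : ℝ))) atTop < 1 := by
  set C' := max C 1
  have hC' : 0 < C' := lt_of_lt_of_le one_pos (le_max_right _ _)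
  have ht : Tendsto (fun n : ℕ => C' ^ (1 / (n:ℝ)) * r) atTop (𝓝 r) := by
    have h1 : Tendsto (fun n : ℕ => 1 / (n:ℝ)) atTop (𝓝 0) := tendsto_one_div_atTop_nhds_zero_nat
    have h2 := (Real.continuousAt_const_rpow hC'.ne').tendsto.comp h1
    rw [Real.rpow_zero] at h2
    simpa using h2.mul_const r
  have hle : ∀ᶠ n : ℕ in atTop, f n ^ (1 / (n : ℝ)) ≤ C' ^ (1 / (n:ℝ)) * r := by
    filter_upwards [h, eventually_ge_atTop 1] with n hn hn1
    have hn0 : (n:ℝ) ≠ 0 := by positivity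
    calc f n ^ (1 / (n : ℝ)) ≤ (C' * r ^ n) ^ (1 / (n:ℝ)) := by
          refine Real.rpow_le_rpow (h0 n) (hn.trans ?_) (by positivity)
          gcongr
          exact le_max_left _ _
      _ = _ := by
          rw [Real.mul_rpow hC'.le (by positivity), one_div, Real.pow_rpow_inv_natCast hr.le (by omega)]
  calc limsup (fun n : ℕ => f n ^ (1 / (n : ℝ))) atTop
      ≤ limsup (fun n : ℕ => C' ^ (1 / (n:ℝ)) * r) atTop := by
        refine limsup_le_limsup hle ?_ ht.isBoundedUnder_le
        exact (isBoundedUnder_of ⟨0, fun n => Real.rpow_nonneg (h0 n) _⟩ :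
          IsBoundedUnder (· ≥ ·) atTop _).isCoboundedUnder_le
    _ = r := ht.limsup_eq
    _ < 1 := hr1

theorem le_of_limsup_lt (f : ℕ → ℝ) (h0 : ∀ n, 0 ≤ f n) (K M : ℝ) (hK : 1 ≤ K) (hM : 1 ≤ M)
    (hf : ∀ n, f n ≤ K * M ^ n)
    (h : limsup (fun n : ℕ => f n ^ (1 / (n : ℝ))) atTop < 1) :
    ∃ r, 0 < r ∧ r < 1 ∧ ∀ᶠ n : ℕ in atTop, f n ≤ r ^ n := by
  obtain ⟨c, hc1, hc2⟩ := exists_between h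
  refine ⟨max c (1/2), by positivity, max_lt hc2 (by norm_num), ?_⟩
  have hb : IsBoundedUnder (· ≤ ·) atTop (fun n : ℕ => f n ^ (1 / (n : ℝ))) := by
    refine isBoundedUnder_of_eventually_le (a := K * M) ?_
    filter_upwards [eventually_ge_atTop 1] with n hn
    have hn1 : (1:ℝ) ≤ n := by exact_mod_cast hn
    calc f n ^ (1 / (n : ℝ)) ≤ (K * M ^ n) ^ (1 / (n:ℝ)) :=
          Real.rpow_le_rpow (h0 n) (hf n) (by positivity)
      _ = K ^ (1 / (n:ℝ)) * M := by
          rw [Real.mul_rpow (by positivity) (by positivity), one_div,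
            Real.pow_rpow_inv_natCast (by positivity) (by omega)]
      _ ≤ K * M := by
          gcongr
          calc K ^ (1 / (n:ℝ)) ≤ K ^ (1:ℝ) := Real.rpow_le_rpow_of_exponent_le hK (by
                rw [div_le_one (by positivity)]; exact hn1)
            _ = K := Real.rpow_one K
  filter_upwards [eventually_lt_of_limsup_lt hc1 hb, eventually_ge_atTop 1] with n hn hn1
  calc f n = (f n ^ (1 / (n : ℝ))) ^ n := by
        rw [one_div, Real.rpow_inv_natCast_pow (h0 n) (by omega)]
    _ ≤ _ := by
        have := h0 n
        gcongr
        exact hn.le.trans (le_max_left _ _)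

theorem ues_of (S : I → Matrix (Fin d) (Fin d) ℂ) (Λ : Set (ℕ → I)) (hinv : ShiftInv Λ)
    (M : ℝ) (hM : 1 ≤ M) (hb : ∀ x ∈ Λ, ∀ n, opNorm (prodS S x n) ≤ M ^ n)
    (c : ℝ) (hc : 0 < c) (hc1 : c < 1) (N : ℕ)
    (h : ∀ x ∈ Λ, ∃ n, 1 ≤ n ∧ n ≤ N ∧ opNorm (prodS S x n) ≤ c) :
    ∃ C r : ℝ, 0 < r ∧ r < 1 ∧ ∀ x ∈ Λ, ∀ n, opNorm (prodS S x n) ≤ C * r ^ n := by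
  rcases Nat.eq_zero_or_pos N with h0 | hN
  · refine ⟨0, 1/2, by norm_num, by norm_num, fun x hx => ?_⟩
    obtain ⟨n, h1, h2, _⟩ := h x hx
    omega
  have hN' : (0:ℝ) < N := by exact_mod_cast hN
  set r := c ^ (1 / (N:ℝ)) with hr
  have hr0 : 0 < r := Real.rpow_pos_of_pos hc _
  have hr1 : r < 1 := Real.rpow_lt_one hc.le hc1 (by positivity)
  have hrN : r ^ N = c := by rw [hr, one_div, Real.rpow_inv_natCast_pow hc.le (by omega)]
  refine ⟨M ^ N / c, r, hr0, hr1, fun x hx m => ?_⟩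
  induction m using Nat.strong_induction_on generalizing x with
  | _ m ih =>
    rcases le_or_gt m N with hm | hm
    · have h1 : c ≤ r ^ m := by rw [← hrN]; exact pow_le_pow_of_le_one hr0.le hr1.le hm
      calc opNorm (prodS S x m) ≤ M ^ m := hb x hx m
        _ ≤ M ^ N := pow_le_pow_right₀ hM hm
        _ = M ^ N / c * c := by field_simp
        _ ≤ _ := by gcongr
    · obtain ⟨n, h1, h2, h3⟩ := h x hx
      obtain ⟨l, rfl⟩ := Nat.exists_eq_add_of_le (h2.trans hm.le)
      rw [prodS_add]
      have h4 := ih l (by omega) _ (shift_mem hinv n x hx)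
      have h5 : c ≤ r ^ n := by rw [← hrN]; exact pow_le_pow_of_le_one hr0.le hr1.le h2
      calc _ ≤ _ := opNorm_mul _ _
        _ ≤ (M ^ N / c * r ^ l) * r ^ n :=
            mul_le_mul h4 (h3.trans h5) (opNorm_nonneg _) (by positivity)
        _ = _ := by rw [pow_add]; ring

theorem ues_of_two [TopologicalSpace I] (S : I → Matrix (Fin d) (Fin d) ℂ) (hS : Continuous S)
    (Λ : Set (ℕ → I)) (hcomp : IsCompact Λ) (hinv : ShiftInv Λ)
    (M : ℝ) (hM : 1 ≤ M) (hb : ∀ x ∈ Λ, ∀ n, opNorm (prodS S x n) ≤ M ^ n)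
    (h : ∀ x ∈ Λ, limsup (fun n : ℕ => opNorm (prodS S x n) ^ (1 / (n : ℝ))) atTop < 1) :
    ∃ C r : ℝ, 0 < r ∧ r < 1 ∧ ∀ x ∈ Λ, ∀ n, opNorm (prodS S x n) ≤ C * r ^ n := by
  have h1 : ∀ x ∈ Λ, ∃ n, 1 ≤ n ∧ opNorm (prodS S x n) < 1/2 := by
    intro x hx
    obtain ⟨r, hr0, hr1, hr⟩ := le_of_limsup_lt (fun n => opNorm (prodS S x n))
      (fun n => opNorm_nonneg _) 1 M le_rfl hM
      (fun n => by rw [one_mul]; exact hb x hx n) (h x hx)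
    have h2 := (tendsto_pow_atTop_nhds_zero_of_lt_one hr0.le hr1).eventually_lt_const
      (show (0:ℝ) < 1/2 by norm_num)
    obtain ⟨n, h3, h4, h5⟩ := (hr.and (h2.and (eventually_ge_atTop 1))).exists
    exact ⟨n, h5, h3.trans_lt h4⟩
  have hcov : Λ ⊆ ⋃ n : {n : ℕ // 1 ≤ n}, {x | opNorm (prodS S x n.1) < 1/2} := by
    intro x hx
    obtain ⟨n, hn, h2⟩ := h1 x hx
    exact Set.mem_iUnion.2 ⟨⟨n, hn⟩, h2⟩
  have hop : ∀ n : {n : ℕ // 1 ≤ n}, IsOpen {x | opNorm (prodS S x n.1) < 1/2} := by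
    intro n
    exact isOpen_lt (continuous_opNorm.comp (continuous_prodS S hS n.1)) continuous_const
  obtain ⟨t, ht⟩ := hcomp.elim_finite_subcover _ hop hcov
  refine ues_of S Λ hinv M hM hb (1/2) (by norm_num) (by norm_num) (t.sup fun n => n.1) ?_
  intro x hx
  obtain ⟨n, hn⟩ := Set.mem_iUnion.1 (ht hx)
  obtain ⟨hn1, hn2⟩ := Set.mem_iUnion.1 hn
  exact ⟨n.1, n.2, Finset.le_sup (f := fun n : {n : ℕ // 1 ≤ n} => n.1) hn1, le_of_lt hn2⟩
end dyn

section main1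
variable {d : ℕ} {I : Type*}

theorem cprod_smul (c : ℂ) (B : ℕ → Matrix (Fin d) (Fin d) ℂ) (i l : ℕ) :
    cprod (fun j => c • B j) i l = c ^ l • cprod B i l := by
  induction l with
  | zero => simp [cprod]
  | succ l ih => rw [cprod, ih, cprod, smul_mul_smul_comm, pow_succ']

theorem ues_of_one (hd : 1 ≤ d) (S : I → Matrix (Fin d) (Fin d) ℂ)
    (Λ : Set (ℕ → I)) (hne : Λ.Nonempty) (hinv : ShiftInv Λ)
    (M : ℝ) (hM : 1 ≤ M) (hb : ∀ x ∈ Λ, ∀ n, opNorm (prodS S x n) ≤ M ^ n)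
    (h : gsr S Λ < 1) :
    ∃ C r : ℝ, 0 < r ∧ r < 1 ∧ ∀ x ∈ Λ, ∀ n, opNorm (prodS S x n) ≤ C * r ^ n := by
  have : Nonempty Λ := hne.to_subtype
  -- spectral radii
  have hspec : ∃ r : ℝ, 0 < r ∧ r < 1 ∧
      ∀ᶠ n : ℕ in atTop, ∀ x ∈ Λ, specRad (prodS S x n) ≤ r ^ n := by
    have hrt : ∀ n : ℕ, 1 ≤ n → ∀ x ∈ Λ, specRad (prodS S x n) ^ (1 / (n:ℝ)) ≤ M := by
      intro n hn x hx
      calc _ ≤ (M ^ n) ^ (1 / (n:ℝ)) := Real.rpow_le_rpow (specRad_nonneg _)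
            ((specRad_le hd _).trans (hb x hx n)) (by positivity)
        _ = M := by rw [one_div, Real.pow_rpow_inv_natCast (by positivity) (by omega)]
    obtain ⟨c, hc1, hc2⟩ := exists_between h
    refine ⟨max c (1/2), by positivity, max_lt hc2 (by norm_num), ?_⟩
    have hbd : IsBoundedUnder (· ≤ ·) atTop
        (fun n : ℕ => ⨆ x : Λ, specRad (prodS S x.1 n) ^ (1 / (n : ℝ))) := by
      refine isBoundedUnder_of_eventually_le (a := M) ?_
      filter_upwards [eventually_ge_atTop 1] with n hn
      exact ciSup_le fun x => hrt n hn x.1 x.2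
    filter_upwards [eventually_lt_of_limsup_lt hc1 hbd, eventually_ge_atTop 1] with n hn hn1 x hx
    have h1 : specRad (prodS S x n) ^ (1 / (n:ℝ)) ≤ c := by
      refine le_trans ?_ hn.le
      exact le_ciSup (f := fun x : Λ => specRad (prodS S x.1 n) ^ (1 / (n : ℝ)))
        ⟨M, by rintro _ ⟨y, rfl⟩; exact hrt n hn1 y.1 y.2⟩ ⟨x, hx⟩
    calc specRad (prodS S x n) = (specRad (prodS S x n) ^ (1 / (n : ℝ))) ^ n := by
          rw [one_div, Real.rpow_inv_natCast_pow (specRad_nonneg _) (by omega)]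
      _ ≤ _ := pow_le_pow_left₀ (Real.rpow_nonneg (specRad_nonneg _) _)
          (h1.trans (le_max_left _ _)) _
  obtain ⟨r, hr0, hr1, hr⟩ := hspec
  let a : ℕ → ℝ := fun n => ⨆ x : Λ, opNorm (prodS S x.1 n)
  have hbdd : ∀ n, BddAbove (Set.range fun x : Λ => opNorm (prodS S x.1 n)) := by
    intro n
    exact ⟨M ^ n, by rintro _ ⟨y, rfl⟩; exact hb y.1 y.2 n⟩
  have hle : ∀ n, ∀ x ∈ Λ, opNorm (prodS S x n) ≤ a n := fun n x hx =>
    le_ciSup (hbdd n) ⟨x, hx⟩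
  by_cases hex : ∃ n, 1 ≤ n ∧ a n < 1
  · obtain ⟨n, hn, han⟩ := hex
    exact ues_of S Λ hinv M hM hb (max (a n) (1/2)) (by positivity)
      (max_lt han (by norm_num)) n fun x hx => ⟨n, hn, le_rfl, (hle n x hx).trans (le_max_left _ _)⟩
  exfalso
  push Not at hex
  have ha1 : ∀ n, 1 ≤ a n := by
    intro n
    rcases Nat.eq_zero_or_pos n with rfl | hn
    · obtain ⟨x, hx⟩ := hne
      refine le_trans ?_ (hle 0 x hx)
      rw [prodS, opNorm_one hd]
    · exact hex n hn
  have ha0 : ∀ n, 0 < a n := fun n => one_pos.trans_le (ha1 n)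
  let u : ℕ → ℝ := fun n => Real.log (a n)
  have hua : ∀ n, Real.exp (u n) = a n := fun n => Real.exp_log (ha0 n)
  have hu0 : ∀ n, 0 ≤ u n := fun n => Real.log_nonneg (ha1 n)
  have hsub : Subadditive u := by
    intro m n
    change Real.log _ ≤ Real.log _ + Real.log _
    rw [← Real.log_mul (ha0 m).ne' (ha0 n).ne']
    refine Real.log_le_log (ha0 _) (ciSup_le fun x => ?_)
    rw [prodS_add, mul_comm]
    exact (opNorm_mul _ _).trans (mul_le_mul (hle n _ (shift_mem hinv m x.1 x.2))
      (hle m x.1 x.2) (opNorm_nonneg _) (ha0 _).le)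
  have hbb : BddBelow (Set.range fun n => u n / n) :=
    ⟨0, by rintro _ ⟨n, rfl⟩; exact div_nonneg (hu0 n) (Nat.cast_nonneg n)⟩
  have htend := hsub.tendsto_lim hbb
  set L := hsub.lim with hL
  have hL0 : 0 ≤ L := ge_of_tendsto' htend fun n => div_nonneg (hu0 n) (Nat.cast_nonneg n)
  obtain ⟨N, hN, hasym⟩ := asym d
  have hX : ∀ n, ∃ x ∈ Λ, a (N * n) / 2 ≤ opNorm (prodS S x (N * n)) := by
    intro n
    obtain ⟨x, hx⟩ := exists_lt_of_lt_ciSup (show a (N * n) / 2 < a (N * n) by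
      have := ha0 (N * n); linarith)
    exact ⟨x.1, x.2, hx.le⟩
  choose X hXΛ hX using hX
  let c : ℕ → ℝ := fun n => Real.exp (-(L * n))
  have hc0 : ∀ n, 0 < c n := fun n => Real.exp_pos _
  have hc1 : ∀ n, c n ≤ 1 := by
    intro n
    have : 0 ≤ L * n := by positivity
    exact Real.exp_le_one_iff.2 (by linarith)
  let A : ℕ → ℕ → Matrix (Fin d) (Fin d) ℂ := fun i n =>
    (c n : ℂ) • cprod (fun j => S (X n j)) (i * n) n
  have hA : ∀ n i l, cprod (fun j => A j n) i l =
      ((c n ^ l : ℝ) : ℂ) • prodS S (fun j => X n (j + i * n)) (l * n) := by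
    intro n i l
    have h1 := cprod_smul (c n : ℂ) (fun j => cprod (fun j => S (X n j)) (j * n) n) i l
    rw [cprod_block] at h1
    rw [prodS_shift, Complex.ofReal_pow]
    exact h1
  have hres := hasym A ?_ ?_
  · -- contradiction
    have ht : Tendsto (fun n : ℕ => ∑ q, ∑ p, ‖cprod (fun j => A j n) 0 N p q‖)
        (hyperfilter ℕ : Filter ℕ) (𝓝 0) := by
      have h0 : (0:ℝ) = ∑ q : Fin d, ∑ p : Fin d, (0:ℝ) := by simp
      rw [h0]
      refine tendsto_finsetSum _ fun q _ => tendsto_finsetSum _ fun p _ => ?_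
      obtain ⟨δ, hδ, hev⟩ := hres p q
      refine squeeze_zero' (Eventually.of_forall fun n => norm_nonneg _) hev ?_
      have : Tendsto (fun n : ℕ => Real.exp (-(δ * (n:ℝ)))) atTop (𝓝 0) :=
        Real.tendsto_exp_neg_atTop_nhds_zero.comp
          (tendsto_natCast_atTop_atTop.const_mul_atTop hδ)
      exact this.mono_left Nat.hyperfilter_le_atTop
    have h1 := ht.eventually_lt_const (show (0:ℝ) < 1/2 by norm_num)
    have h2 := Nat.hyperfilter_le_atTop (eventually_ge_atTop 1)
    obtain ⟨n, h3, h4⟩ := (h1.and h2).exists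
    have h4 : 1 ≤ n := h4
    have h5 := (opNorm_le_entries _).trans_lt h3
    rw [hA, opNorm_smul, Complex.norm_real, Real.norm_of_nonneg (pow_nonneg (hc0 n).le _)] at h5
    simp only [zero_mul, add_zero] at h5
    have h6 : L ≤ u (N * n) / ((N * n : ℕ) : ℝ) :=
      hsub.lim_le_div hbb (Nat.mul_pos hN h4).ne'
    have hpos : (0:ℝ) < ((N * n : ℕ) : ℝ) := by exact_mod_cast Nat.mul_pos hN h4
    rw [le_div_iff₀ hpos] at h6
    have h7 : (1:ℝ) ≤ c n ^ N * a (N * n) := by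
      rw [← hua, ← Real.exp_nat_mul, ← Real.exp_add]
      apply Real.one_le_exp
      push_cast at h6
      linarith
    have h8 := hX n
    have h9 : c n ^ N * (a (N * n) / 2) ≤ c n ^ N * opNorm (prodS S (X n) (N * n)) :=
      mul_le_mul_of_nonneg_left h8 (pow_nonneg (hc0 n).le _)
    change c n ^ N * opNorm (prodS S (X n) (N * n)) < 1/2 at h5
    linarith
  · intro i p q ε hε
    refine Nat.hyperfilter_le_atTop ?_
    filter_upwards [htend.eventually_lt_const (show L < L + ε by linarith),
      eventually_ge_atTop 1] with n hn hn1
    have hn0 : (0:ℝ) < n := by exact_mod_cast hn1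
    rw [div_lt_iff₀ hn0] at hn
    refine (entry_le _ p q).trans ?_
    change opNorm ((c n : ℂ) • cprod (fun j => S (X n j)) (i * n) n) ≤ _
    rw [opNorm_smul, Complex.norm_real, Real.norm_of_nonneg (hc0 n).le, ← prodS_shift]
    calc _ ≤ c n * a n := mul_le_mul_of_nonneg_left
          (hle n _ (shift_mem hinv _ _ (hXΛ n))) (hc0 n).le
      _ = Real.exp (-(L * n) + u n) := by rw [Real.exp_add, hua]
      _ ≤ _ := Real.exp_le_exp.2 (by linarith)
  · intro i l hl
    refine ⟨-Real.log r, by have := Real.log_neg hr0 hr1; linarith, ?_⟩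
    refine Nat.hyperfilter_le_atTop ?_
    obtain ⟨n0, hn0⟩ := eventually_atTop.1 hr
    filter_upwards [eventually_ge_atTop n0] with n hn z hz
    rw [hA] at hz
    have hln : n ≤ l * n := Nat.le_mul_of_pos_left n hl
    have h1 := root_le hd _ _ (pow_pos (hc0 n) l) z hz
    have h2 := hn0 (l * n) (hn.trans hln) _ (shift_mem hinv (i * n) _ (hXΛ n))
    calc ‖z‖ ≤ _ := h1
      _ ≤ 1 * r ^ (l * n) := mul_le_mul (pow_le_one₀ (hc0 n).le (hc1 n)) h2
          (specRad_nonneg _) zero_le_one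
      _ ≤ r ^ n := by rw [one_mul]; exact pow_le_pow_of_le_one hr0.le hr1.le hln
      _ = _ := by
          rw [show -(-Real.log r * (n:ℝ)) = n * Real.log r by ring, Real.exp_nat_mul,
            Real.exp_log hr0]
end main1

/-- **Corollary 2.8.** `ρ(S|Λ) < 1`, `Λ`-absolute exponential stability, and `Λ`-pointwise
exponential stability are mutually equivalent. -/
theorem gsr_lt_one_iff_exp_stable {d : ℕ} (hd : 1 ≤ d) {I : Type*} [MetricSpace I]
    (S : I → Matrix (Fin d) (Fin d) ℂ) (hS : Continuous S)
    (Λ : Set (ℕ → I)) (hne : Λ.Nonempty) (hcomp : IsCompact Λ) (hinv : ShiftInv Λ) :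
    (gsr S Λ < 1 ↔
        ∀ x ∈ Λ,
          Filter.limsup (fun n : ℕ => opNorm (prodS S x n) ^ (1 / (n : ℝ))) Filter.atTop
            < 1) ∧
      ((∀ x ∈ Λ,
          Filter.limsup (fun n : ℕ => opNorm (prodS S x n) ^ (1 / (n : ℝ))) Filter.atTop
            < 1) ↔
        ∀ x ∈ Λ, ∀ x₀ : EuclideanSpace ℂ (Fin d), x₀ ≠ 0 →
          Filter.limsup
            (fun n : ℕ => ‖(Matrix.toEuclideanCLM (𝕜 := ℂ) (prodS S x n)) x₀‖ ^ (1 / (n : ℝ)))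
            Filter.atTop < 1) := by
  obtain ⟨M, hM, hb⟩ := exists_M S hS Λ hcomp hinv
  refine ⟨⟨fun h x hx => ?_, fun h => ?_⟩, ⟨fun h x hx x₀ _ => ?_, fun h x hx => ?_⟩⟩
  · obtain ⟨C, r, hr0, hr1, hC⟩ := ues_of_one hd S Λ hne hinv M hM hb h
    exact limsup_lt_of_le (fun n => opNorm (prodS S x n)) (fun n => opNorm_nonneg _) C r hr0 hr1
      (Eventually.of_forall (hC x hx))
  · obtain ⟨C, r, hr0, hr1, hC⟩ := ues_of_two S hS Λ hcomp hinv M hM hb h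
    have : Nonempty Λ := hne.to_subtype
    have hC0 : 0 ≤ C := by
      obtain ⟨x, hx⟩ := hne
      have := (opNorm_nonneg _).trans (hC x hx 0)
      simpa using this
    have key := limsup_lt_of_le (fun n => C * r ^ n) (fun n => by positivity) C r hr0 hr1
      (Eventually.of_forall fun n => le_rfl)
    refine lt_of_le_of_lt ?_ key
    have hrt : ∀ n : ℕ, ∀ x : Λ, specRad (prodS S x.1 n) ^ (1 / (n:ℝ)) ≤
        (C * r ^ n) ^ (1 / (n:ℝ)) := fun n x =>
      Real.rpow_le_rpow (specRad_nonneg _) ((specRad_le hd _).trans (hC x.1 x.2 n)) (by positivity)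
    refine limsup_le_limsup (Eventually.of_forall fun n => ciSup_le (hrt n)) ?_ ?_
    · exact (isBoundedUnder_of ⟨0, fun n => Real.iSup_nonneg
        fun x => Real.rpow_nonneg (specRad_nonneg _) _⟩ :
          IsBoundedUnder (· ≥ ·) atTop _).isCoboundedUnder_le
    · refine isBoundedUnder_of_eventually_le (a := max C 1) ?_
      filter_upwards [eventually_ge_atTop 1] with n hn
      have hn1 : (1:ℝ) ≤ n := by exact_mod_cast hn
      calc (C * r ^ n) ^ (1 / (n:ℝ)) ≤ (max C 1) ^ (1 / (n:ℝ)) := by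
            refine Real.rpow_le_rpow (by positivity) ?_ (by positivity)
            refine le_trans ?_ (le_max_left _ _)
            exact mul_le_of_le_one_right hC0 (pow_le_one₀ hr0.le hr1.le)
        _ ≤ (max C 1) ^ (1:ℝ) := Real.rpow_le_rpow_of_exponent_le (le_max_right _ _) (by
              rw [div_le_one (by positivity)]; exact hn1)
        _ = _ := Real.rpow_one _
  · obtain ⟨C, r, hr0, hr1, hC⟩ := ues_of_two S hS Λ hcomp hinv M hM hb h
    refine limsup_lt_of_le (fun n => ‖(Matrix.toEuclideanCLM (𝕜 := ℂ) (prodS S x n)) x₀‖)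
      (fun n => norm_nonneg _) (C * ‖x₀‖) r hr0 hr1 (Eventually.of_forall fun n => ?_)
    refine (ContinuousLinearMap.le_opNorm _ _).trans ?_
    rw [mul_right_comm]
    exact mul_le_mul_of_nonneg_right (hC x hx n) (norm_nonneg _)
  · have h1 : ∀ b : Fin d, ∃ r, 0 < r ∧ r < 1 ∧ ∀ᶠ n : ℕ in atTop,
        ‖(Matrix.toEuclideanCLM (𝕜 := ℂ) (prodS S x n)) (EuclideanSpace.single b 1)‖ ≤ r ^ n := by
      intro b
      refine le_of_limsup_lt
        (fun n => ‖(Matrix.toEuclideanCLM (𝕜 := ℂ) (prodS S x n)) (EuclideanSpace.single b 1)‖)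
        (fun n => norm_nonneg _) 1 M le_rfl hM (fun n => ?_) (h x hx _ ?_)
      · refine (ContinuousLinearMap.le_opNorm _ _).trans ?_
        have := hb x hx n
        simpa [opNorm] using this
      · simp
    choose r hr0 hr1 hr using h1
    have hne' : (Finset.univ : Finset (Fin d)).Nonempty := ⟨⟨0, hd⟩, Finset.mem_univ _⟩
    set R := Finset.univ.sup' hne' r
    have hR : ∀ b, r b ≤ R := fun b => Finset.le_sup' r (Finset.mem_univ b)
    have hR0 : 0 < R := (hr0 ⟨0, hd⟩).trans_le (hR _)
    have hR1 : R < 1 := (Finset.sup'_lt_iff hne').2 fun b _ => hr1 b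
    refine limsup_lt_of_le (fun n => opNorm (prodS S x n)) (fun n => opNorm_nonneg _) d R hR0 hR1 ?_
    filter_upwards [eventually_all.2 hr] with n hn
    refine (opNorm_le_cols _).trans ?_
    calc _ ≤ ∑ _b : Fin d, R ^ n := Finset.sum_le_sum fun b _ =>
          (hn b).trans (pow_le_pow_left₀ (hr0 b).le (hR b) n)
      _ = _ := by simp
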